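/- Injectivity from boundary injectivity for conformal maps of the disc (Darboux–Picard form of Lemma 2). Let f : ℂ → ℂ be continuous on the closed unit disc {z : |z| ≤ 1} and complex-differentiable (holomorphic) at every point of the open unit disc {z : |z| < 1}. Then f is injective on the closed unit disc if and only if f is injective on the unit circle {z : |z| = 1}. -/

import Mathlib

open Complex Metric Set

open Filter Topology in
theorem exists_cont_log {A : Type} [TopologicalSpace A] [SimplyConnectedSpace A]
    [LocallyPathConnectedSpace A] (φ : A → ℂ) (hφ : Continuous φ) (h0 : ∀ a, φ a ≠ 0) :
    ∃ G : A → ℂ, Continuous G ∧ ∀ a, Complex.exp (G a) = φ a := by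
  obtain ⟨a₀⟩ : Nonempty A := inferInstance
  obtain ⟨F, ⟨-, hF⟩, -⟩ := Complex.isCoveringMapOn_exp.existsUnique_continuousMap_lifts
    (⟨φ, hφ⟩ : C(A, ℂ)) (a₀ := a₀) (e₀ := Complex.log (φ a₀)) (Complex.exp_log (h0 a₀))
    (fun a => h0 a)
  exact ⟨F, F.continuous, fun a => congrFun hF a⟩

theorem no_nonvanishing_extension (H : ℂ → ℂ) (hH : Continuous H) (h0 : ∀ q, H q ≠ 0)
    (p : ℂ) (R : ℝ) (hR : 0 < R) (h : ∀ q, ‖q - p‖ = R → H q = q - p) : False := by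
  obtain ⟨G, hG, hGe⟩ := exists_cont_log H hH h0
  let g₁ : ℝ → ℂ := fun t => G (p + R * Complex.exp (t * I)) - t * I
  have hc : Continuous g₁ := by fun_prop
  have hconst := Complex.isCoveringMap_exp.const_of_comp (A := ℝ) (g := g₁) hc (by
    have key : ∀ t : ℝ, Complex.exp (g₁ t) = R := by
      intro t
      simp only [g₁]
      rw [Complex.exp_sub, hGe, h]
      · rw [add_sub_cancel_left]
        field_simp [Complex.exp_ne_zero]
      · simp [Complex.norm_exp_ofReal_mul_I, abs_of_pos hR]
    intro a a'
    apply Subtype.ext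
    simp only [key]) 0 (2 * Real.pi)
  simp [g₁, Complex.exp_two_pi_mul_I] at hconst
  rw [eq_comm, sub_eq_self] at hconst
  exact Complex.two_pi_I_ne_zero hconst

theorem no_log_on_frontier (V : Set ℂ) (hb : Bornology.IsBounded V)
    (p : ℂ) (hp : p ∈ interior V) (L : ℂ → ℂ) (hL : Continuous L)
    (h : ∀ q ∈ frontier V, Complex.exp (L q) = q - p) : False := by
  classical
  obtain ⟨R, hR, hVR⟩ := hb.subset_ball_lt 0 p
  refine no_nonvanishing_extension (V.piecewise (fun q => Complex.exp (L q)) (fun q => q - p))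
    (Continuous.piecewise h (by fun_prop) (by fun_prop)) ?_ p R hR ?_
  · intro q
    by_cases hq : q ∈ V
    · simp [hq, Complex.exp_ne_zero]
    · simp only [hq, not_false_eq_true, piecewise_eq_of_notMem]
      intro h0
      rw [sub_eq_zero.1 h0] at hq
      exact hq (interior_subset hp)
  · intro q hq
    have : q ∉ V := fun h => by
      have := hVR h
      rw [mem_ball, dist_eq_norm, hq] at this
      exact lt_irrefl _ this
    simp [this]

theorem image_ball_open (f : ℂ → ℂ)
    (hc : ContinuousOn f (closedBall (0 : ℂ) 1))
    (hd : ∀ z ∈ ball (0 : ℂ) 1, DifferentiableAt ℂ f z)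
    (hi : Set.InjOn f (sphere (0 : ℂ) 1)) : IsOpen (f '' ball (0 : ℂ) 1) := by
  have han : AnalyticOnNhd ℂ f (ball (0 : ℂ) 1) :=
    DifferentiableOn.analyticOnNhd (fun z hz => (hd z hz).differentiableWithinAt) isOpen_ball
  rcases han.is_constant_or_isOpen (convex_ball 0 1).isPreconnected with ⟨w, hw⟩ | h
  · exfalso
    have h2 : EqOn f (fun _ => w) (closedBall 0 1) :=
      Set.EqOn.of_subset_closure (s := ball 0 1) hw hc continuousOn_const ball_subset_closedBall
        (by rw [closure_ball _ one_ne_zero])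
    have := hi (show (1 : ℂ) ∈ sphere 0 1 by simp) (show (-1 : ℂ) ∈ sphere 0 1 by simp)
      (by rw [h2 (by simp), h2 (by simp)])
    norm_num at this
  · exact h _ subset_rfl isOpen_ball

theorem image_ball_disjoint (f : ℂ → ℂ)
    (hc : ContinuousOn f (closedBall (0 : ℂ) 1))
    (hd : ∀ z ∈ ball (0 : ℂ) 1, DifferentiableAt ℂ f z)
    (hi : Set.InjOn f (sphere (0 : ℂ) 1)) (w : ℂ) (hw : w ∈ sphere (0 : ℂ) 1)
    (hwV : f w ∈ f '' ball (0 : ℂ) 1) : False := by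
  set V := f '' ball (0 : ℂ) 1 with hV
  have hVo : IsOpen V := image_ball_open f hc hd hi
  have hKc : IsCompact (f '' closedBall (0 : ℂ) 1) := (isCompact_closedBall 0 1).image_of_continuousOn hc
  have hVK : V ⊆ f '' closedBall (0 : ℂ) 1 := image_mono ball_subset_closedBall
  have hVb : Bornology.IsBounded V := hKc.isBounded.subset hVK
  have hw1 : ‖w‖ = 1 := by simpa using hw
  have hw0 : w ≠ 0 := by rintro rfl; simp at hw1
  let A : Set ℂ := {a | a ∈ sphere (0 : ℂ) 1 ∧ f a ∈ Vᶜ}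
  have hcs : ContinuousOn f (sphere (0 : ℂ) 1) := hc.mono sphere_subset_closedBall
  have hAcl : IsClosed A := hcs.preimage_isClosed_of_isClosed isClosed_sphere hVo.isClosed_compl
  have hAc : IsCompact A := (isCompact_sphere (0 : ℂ) 1).of_isClosed_subset hAcl fun a ha => ha.1
  have : CompactSpace A := isCompact_iff_compactSpace.1 hAc
  -- logarithm on the parameter interval
  let J := Ioo (-Real.pi) Real.pi
  have hJc : Convex ℝ J := convex_Ioo _ _
  have hJne : J.Nonempty := ⟨0, by simp [J, Real.pi_pos]⟩
  have : ContractibleSpace J := hJc.contractibleSpace hJne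
  have : LocallyPathConnectedSpace J := (isOpen_Ioo).locallyPathConnectedSpace
  have hsph : ∀ t : ℝ, -w * Complex.exp (t * I) ∈ sphere (0 : ℂ) 1 := fun t => by
    simp [Complex.norm_exp_ofReal_mul_I, hw1]
  obtain ⟨l, hl, hle⟩ := exists_cont_log (A := J)
    (fun t => f (-w * Complex.exp ((t : ℝ) * I)) - f w)
    ((hcs.comp_continuous (f := fun t : J => -w * Complex.exp ((t : ℝ) * I)) (by fun_prop)
      (fun t => hsph t)).sub (continuous_const (y := f w))) (by
      rintro ⟨t, ht⟩ h
      have h1 := hi (hsph t) hw (sub_eq_zero.1 h)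
      have h2 : Complex.exp (t * I) = -1 := by
        apply mul_left_cancel₀ (neg_ne_zero.2 hw0)
        rw [h1]; ring
      have h3 := Complex.arg_exp_mul_I t
      rw [h2, Complex.arg_neg_one, (toIocMod_eq_self Real.two_pi_pos).2 ⟨ht.1, by linarith [ht.2]⟩] at h3
      exact ht.2.ne h3.symm)
  have hAw : ∀ a ∈ A, a ≠ w := by
    rintro a ha rfl
    exact ha.2 hwV
  have hAslit : ∀ a ∈ A, -a / w ∈ slitPlane := by
    intro a ha
    have hn : ‖-a / w‖ = 1 := by
      have : ‖a‖ = 1 := by simpa using ha.1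
      simp [this, hw1]
    rw [mem_slitPlane_iff_arg]
    refine ⟨fun h => hAw a ha ?_, by intro h; simp [h] at hn⟩
    have := Complex.norm_mul_exp_arg_mul_I (-a / w)
    rw [hn, h, Complex.exp_pi_mul_I] at this
    field_simp at this
    simpa using this.symm
  have harg : ∀ a : A, Complex.arg (-a / w) ∈ J := fun a =>
    ⟨Complex.neg_pi_lt_arg _, lt_of_le_of_ne (Complex.arg_le_pi _)
      (mem_slitPlane_iff_arg.1 (hAslit a a.2)).1⟩
  have hargc : Continuous (fun a : A => (⟨Complex.arg (-a / w), harg a⟩ : J)) := by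
    refine Continuous.subtype_mk ?_ _
    rw [continuous_iff_continuousAt]
    intro a
    exact (Complex.continuousAt_arg (hAslit a a.2)).comp (f := fun a : A => -(a : ℂ) / w)
      (Continuous.continuousAt (by fun_prop))
  have hem : Topology.IsClosedEmbedding (fun a : A => f a) :=
    Continuous.isClosedEmbedding (hcs.comp_continuous continuous_subtype_val fun a => a.2.1)
      fun a b h => Subtype.ext (hi a.2.1 b.2.1 h)
  obtain ⟨L, hL⟩ := ContinuousMap.exists_extension' hem
    (⟨fun a : A => l ⟨Complex.arg (-a / w), harg a⟩, hl.comp hargc⟩ : C(A, ℂ))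
  refine no_log_on_frontier V hVb (f w) (by rwa [hVo.interior_eq]) L L.continuous ?_
  intro q hq
  rw [hVo.frontier_eq] at hq
  obtain ⟨a, ha, rfl⟩ := closure_minimal hVK hKc.isClosed hq.1
  have has : a ∈ sphere (0 : ℂ) 1 := by
    by_contra hcon
    refine hq.2 ⟨a, ?_, rfl⟩
    rw [← ball_union_sphere] at ha
    exact ha.resolve_right hcon
  have haA : a ∈ A := ⟨has, hq.2⟩
  have h1 := congrFun hL ⟨a, haA⟩
  simp only [Function.comp_apply, ContinuousMap.coe_mk] at h1
  rw [h1, hle]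
  have hn : ‖-a / w‖ = 1 := by
    have : ‖a‖ = 1 := by simpa using has
    simp [this, hw1]
  have := Complex.norm_mul_exp_arg_mul_I (-a / w)
  rw [hn, ofReal_one, one_mul] at this
  simp only [this]
  congr 2
  field_simp

open Topology in
theorem hurwitz_shift (f : ℂ → ℂ)
    (hc : ContinuousOn f (closedBall (0 : ℂ) 1))
    (hd : ∀ z ∈ ball (0 : ℂ) 1, DifferentiableAt ℂ f z)
    (z₀ c : ℂ) (hz : z₀ ∈ ball (0 : ℂ) 1) (hw : z₀ - c ∈ ball (0 : ℂ) 1)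
    (h0 : f z₀ = f (z₀ - c)) (hne : ∀ᶠ z in 𝓝[≠] z₀, f z ≠ f (z - c)) :
    ∃ η > 0, ∀ s : ℂ, ‖s - c‖ < η → ∃ z ∈ ball (0 : ℂ) 1, z - s ∈ ball (0 : ℂ) 1 ∧
      f z = f (z - s) := by
  obtain ⟨ρ₁, hρ₁, h1⟩ := Metric.isOpen_iff.1 isOpen_ball z₀ hz
  obtain ⟨ρ₂, hρ₂, h2⟩ := Metric.isOpen_iff.1 isOpen_ball (z₀ - c) hw
  rw [eventually_nhdsWithin_iff, Metric.eventually_nhds_iff] at hne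
  obtain ⟨ρ₃, hρ₃, h3⟩ := hne
  obtain ⟨ρ, hρ, hle1, hle2, hle3⟩ : ∃ ρ > 0, ρ ≤ ρ₁ ∧ ρ ≤ ρ₂ ∧ ρ ≤ ρ₃ :=
    ⟨min ρ₁ (min ρ₂ ρ₃), by positivity, by simp, by simp, by simp⟩
  have H1 : ∀ z, ‖z - z₀‖ < ρ → z ∈ ball (0 : ℂ) 1 := fun z hz => h1 (by
    rw [mem_ball, dist_eq_norm]; linarith)
  have H2 : ∀ z s, ‖z - z₀‖ < 3 * ρ / 4 → ‖s - c‖ < ρ / 4 → z - s ∈ ball (0 : ℂ) 1 := by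
    intro z s hz hs
    apply h2
    rw [mem_ball, dist_eq_norm]
    have : z - s - (z₀ - c) = (z - z₀) - (s - c) := by ring
    rw [this]
    linarith [norm_sub_le (z - z₀) (s - c)]
  have hcc : ‖c - c‖ < ρ / 4 := by simp; linarith
  have hana : ∀ s, ‖s - c‖ < ρ / 4 →
      DifferentiableOn ℂ (fun z => f z - f (z - s)) (ball z₀ (3 * ρ / 4)) := by
    intro s hs z hz
    rw [mem_ball, dist_eq_norm] at hz
    have d1 := hd z (H1 z (by linarith))
    have d2 := hd (z - s) (H2 z s hz hs)
    have d3 : DifferentiableAt ℂ (fun z => f (z - s)) z :=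
      DifferentiableAt.comp (g := f) (f := fun z => z - s) z d2 (by fun_prop)
    exact (d1.sub d3).differentiableWithinAt
  have hr : 0 < ρ / 2 := by linarith
  have hsub : closedBall z₀ (ρ / 2) ⊆ ball z₀ (3 * ρ / 4) :=
    closedBall_subset_ball (by linarith)
  have hgc : ContinuousOn (fun z => ‖f z - f (z - c)‖) (sphere z₀ (ρ / 2)) :=
    ((hana c hcc).continuousOn.mono (sphere_subset_closedBall.trans hsub)).norm
  obtain ⟨x, hx, hmin⟩ := (isCompact_sphere z₀ (ρ / 2)).exists_isMinOn
    (NormedSpace.sphere_nonempty.2 hr.le) hgc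
  set δ := ‖f x - f (x - c)‖ with hδ
  have hδ0 : 0 < δ := by
    rw [hδ, norm_pos_iff, sub_ne_zero]
    have hx' : dist x z₀ = ρ / 2 := hx
    refine h3 (by rw [hx']; linarith) ?_
    rintro rfl
    simp at hx'
    linarith
  have huc := (isCompact_closedBall (0 : ℂ) 1).uniformContinuousOn_of_continuous hc
  rw [Metric.uniformContinuousOn_iff] at huc
  obtain ⟨η, hη, hu⟩ := huc (δ / 4) (by linarith)
  refine ⟨min η (ρ / 4), by positivity, fun s hs => ?_⟩
  have hs1 : ‖s - c‖ < η := hs.trans_le (min_le_left _ _)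
  have hs2 : ‖s - c‖ < ρ / 4 := hs.trans_le (min_le_right _ _)
  have hclose : ∀ z, ‖z - z₀‖ < 3 * ρ / 4 → ‖f (z - s) - f (z - c)‖ < δ / 4 := by
    intro z hz
    rw [← dist_eq_norm]
    refine hu _ (ball_subset_closedBall (H2 z s hz hs2)) _
      (ball_subset_closedBall (H2 z c hz hcc)) ?_
    rw [dist_eq_norm, show z - s - (z - c) = -(s - c) by ring, norm_neg]
    exact hs1
  have hz0n : ‖z₀ - z₀‖ < 3 * ρ / 4 := by simp; linarith
  have hcen : ‖f z₀ - f (z₀ - s)‖ < δ / 4 := by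
    rw [h0, norm_sub_rev]; exact hclose z₀ hz0n
  have hsp : ∀ z ∈ sphere z₀ (ρ / 2),
      δ / 2 ≤ ‖(f z - f (z - s)) - (f z₀ - f (z₀ - s))‖ := by
    intro z hz
    have a1 : δ ≤ ‖f z - f (z - c)‖ := hmin hz
    have hz' : ‖z - z₀‖ = ρ / 2 := by rw [← dist_eq_norm]; exact hz
    have a2 := hclose z (by linarith)
    have a3 : f z - f (z - c) = ((f z - f (z - s)) - (f z₀ - f (z₀ - s)))
      + (f (z - s) - f (z - c)) + (f z₀ - f (z₀ - s)) := by ring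
    have a4 := norm_add₃_le (a := (f z - f (z - s)) - (f z₀ - f (z₀ - s)))
      (b := f (z - s) - f (z - c)) (c := f z₀ - f (z₀ - s))
    rw [← a3] at a4
    linarith
  have hdc : DiffContOnCl ℂ (fun z => f z - f (z - s)) (ball z₀ (ρ / 2)) :=
    ((hana s hs2).mono hsub).diffContOnCl_ball subset_rfl
  have hfreq : ∃ᶠ z in 𝓝 z₀, f z - f (z - s) ≠ f z₀ - f (z₀ - s) := by
    intro hev
    simp only [ne_eq, not_not] at hev
    have := ((hana s hs2).analyticOnNhd isOpen_ball).eqOn_of_preconnected_of_eventuallyEq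
      analyticOnNhd_const (convex_ball _ _).isPreconnected
      (mem_ball_self (by linarith)) hev
    have e := this (hsub (sphere_subset_closedBall hx))
    have e2 := hsp x hx
    simp only at e
    rw [e, sub_self, norm_zero] at e2
    linarith
  obtain ⟨z, hzb, hz0⟩ := hdc.ball_subset_image_closedBall hr hsp hfreq
    (show (0 : ℂ) ∈ _ by rw [mem_ball, dist_eq_norm, zero_sub, norm_neg]; linarith)
  have hzb' := hsub hzb
  rw [mem_ball, dist_eq_norm] at hzb'
  exact ⟨z, H1 z (by linarith), H2 z s hzb' hs2, sub_eq_zero.1 hz0⟩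

/-- **Darboux–Picard:** a map continuous on the closed unit disc and holomorphic on the
open unit disc is injective on the closed disc iff it is injective on the unit circle. -/
theorem injOn_closedBall_iff_injOn_sphere (f : ℂ → ℂ)
    (hc : ContinuousOn f (closedBall (0 : ℂ) 1))
    (hd : ∀ z ∈ ball (0 : ℂ) 1, DifferentiableAt ℂ f z) :
    Set.InjOn f (closedBall (0 : ℂ) 1) ↔ Set.InjOn f (sphere (0 : ℂ) 1) := by
  refine ⟨fun h => h.mono sphere_subset_closedBall, fun hi => ?_⟩
  have hdisj := image_ball_disjoint f hc hd hi
  have hcase : ∀ z ∈ closedBall (0 : ℂ) 1, z ∈ ball (0 : ℂ) 1 ∨ z ∈ sphere (0 : ℂ) 1 := by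
    intro z hz
    rwa [← ball_union_sphere] at hz
  by_contra hcon
  obtain ⟨a, ha, b, hb, hab, hne⟩ : ∃ a ∈ closedBall (0 : ℂ) 1, ∃ b ∈ closedBall (0 : ℂ) 1,
      f a = f b ∧ a ≠ b := by
    simpa [Set.InjOn] using hcon
  let K : Set (ℂ × ℂ) := {x | x ∈ closedBall (0 : ℂ) 1 ×ˢ closedBall (0 : ℂ) 1 ∧
    f x.1 - f x.2 ∈ ({0} : Set ℂ)}
  have hP : IsCompact (closedBall (0 : ℂ) 1 ×ˢ closedBall (0 : ℂ) 1) :=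
    (isCompact_closedBall 0 1).prod (isCompact_closedBall 0 1)
  have hKcl : IsClosed K := by
    refine ContinuousOn.preimage_isClosed_of_isClosed ?_ hP.isClosed isClosed_singleton
    exact (hc.comp continuousOn_fst fun x hx => hx.1).sub
      (hc.comp continuousOn_snd fun x hx => hx.2)
  have hK : IsCompact K := hP.of_isClosed_subset hKcl fun x hx => hx.1
  obtain ⟨⟨z, w⟩, ⟨⟨hz, hw⟩, hzw⟩, hmax⟩ := hK.exists_isMaxOn
    ⟨(a, b), ⟨ha, hb⟩, by simp [hab]⟩
    (f := fun x => ‖x.1 - x.2‖) (by fun_prop)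
  have hmax' : ∀ x ∈ closedBall (0 : ℂ) 1, ∀ y ∈ closedBall (0 : ℂ) 1, f x = f y →
      ‖x - y‖ ≤ ‖z - w‖ := fun x hx y hy hxy => hmax (a := (x, y)) ⟨⟨hx, hy⟩, by simp [hxy]⟩
  replace hzw : f z = f w := sub_eq_zero.1 hzw
  simp only at hz hw
  have hpos : 0 < ‖z - w‖ :=
    lt_of_lt_of_le (norm_pos_iff.2 (sub_ne_zero.2 hne)) (hmax' a ha b hb hab)
  have hneq : z ≠ w := by rintro rfl; simp at hpos
  have hzB : z ∈ ball (0 : ℂ) 1 ∧ w ∈ ball (0 : ℂ) 1 := by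
    rcases hcase z hz with h1 | h1 <;> rcases hcase w hw with h2 | h2
    · exact ⟨h1, h2⟩
    · exact (hdisj w h2 ⟨z, h1, hzw⟩).elim
    · exact (hdisj z h1 ⟨w, h2, hzw.symm⟩).elim
    · exact (hneq (hi h1 h2 hzw)).elim
  obtain ⟨hzb, hwb⟩ := hzB
  set c := z - w with hcdef
  have hwc : z - c = w := by simp [hcdef]
  have hshift : DifferentiableOn ℂ (fun x => f (x - c)) (ball c 1) := by
    intro x hx
    have d2 := hd (x - c) (by simpa [dist_eq_norm] using hx)
    exact (DifferentiableAt.comp (g := f) (f := fun z => z - c) x d2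
      (by fun_prop)).differentiableWithinAt
  have hfd : DifferentiableOn ℂ f (ball 0 1) := fun x hx => (hd x hx).differentiableWithinAt
  have hfa := hfd.analyticOnNhd isOpen_ball
  have hsa := hshift.analyticOnNhd isOpen_ball
  have hzc : z ∈ ball c 1 := by
    rw [mem_ball, dist_eq_norm, hwc]; simpa using hwb
  rcases (hfa z hzb).eventually_eq_or_eventually_ne (hsa z hzc) with hev | hev
  · have hE : EqOn f (fun x => f (x - c)) (ball 0 1 ∩ ball c 1) :=
      (hfa.mono inter_subset_left).eqOn_of_preconnected_of_eventuallyEq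
        (hsa.mono inter_subset_right)
        ((convex_ball _ _).inter (convex_ball _ _)).isPreconnected ⟨hzb, hzc⟩ hev
    have hE2 : EqOn f (fun x => f (x - c)) (closedBall 0 1 ∩ ball c 1) := by
      refine Set.EqOn.of_subset_closure hE (hc.mono inter_subset_left)
        (hshift.continuousOn.mono inter_subset_right)
        (inter_subset_inter_left _ ball_subset_closedBall) ?_
      rw [← closure_ball (0 : ℂ) one_ne_zero]
      exact isOpen_ball.closure_inter
    have hc2 : ‖c‖ < 2 := by
      have := norm_sub_le z w
      rw [mem_ball_zero_iff] at hzb hwb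
      linarith
    have hcn : (‖c‖ : ℂ) ≠ 0 := by exact_mod_cast hpos.ne'
    let u : ℂ := c / ‖c‖
    have hu : ‖u‖ = 1 := by simp [u, hpos.ne']
    have huc : ‖u - c‖ < 1 := by
      have : u - c = ((1 - ‖c‖ : ℝ) : ℂ) * u := by
        simp only [u]; push_cast; field_simp
      rw [this, norm_mul, hu, mul_one, Complex.norm_real, Real.norm_eq_abs, abs_lt]
      constructor <;> linarith
    have := hE2 (show u ∈ closedBall 0 1 ∩ ball c 1 from
      ⟨by simp [hu], by rw [mem_ball, dist_eq_norm]; exact huc⟩)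
    exact hdisj u (by simp [hu]) ⟨u - c, by simpa using huc, this.symm⟩
  · obtain ⟨η, hη, H⟩ := hurwitz_shift f hc hd z c hzb (by rwa [hwc]) (by rw [hwc, hzw]) hev
    have hcn : (‖c‖ : ℂ) ≠ 0 := by exact_mod_cast hpos.ne'
    let τ : ℝ := η / (2 * ‖c‖)
    have hτ : 0 < τ := by positivity
    obtain ⟨x, hx, hxs, hfx⟩ := H (((1 + τ : ℝ) : ℂ) * c) (by
      have : ((1 + τ : ℝ) : ℂ) * c - c = (τ : ℂ) * c := by push_cast; ring
      rw [this, norm_mul, Complex.norm_real, Real.norm_eq_abs, abs_of_pos hτ]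
      simp only [τ]
      field_simp
      linarith)
    have := hmax' x (ball_subset_closedBall hx) _ (ball_subset_closedBall hxs) hfx
    rw [sub_sub_cancel, norm_mul, Complex.norm_real, Real.norm_eq_abs,
      abs_of_pos (by linarith)] at this
    nlinarith
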